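/- Let (G_s)_{s≥1} be a random growing graph sequence (almost surely satisfying the structural properties in the context), let t≥1, u≠v∈[t], let (ℓ_{k,t'})_{k≥0,t'≥t} be a birth-threshold array, and let K̲_{t,t'} := K_{t,t'} − M_G for a fixed integer M_G≥0, where K_{t,t'} := max( 2⌊(log log t − log(1∨log(t'/t)))/|log(τ−2)|⌋ , 2 ) for a fixed τ∈(2,3). Then P( there exists t'≥t with d_G^{(t')}(u,v) ≤ 2·K̲_{t,t'} ) ≤ Σ_{q∈{u,v}} Σ_{t'≥t} Σ_{k=0}^{K̲_{t,t'}} 1{k≥2 or t'=t}·P(E_bad^{(q)}(k,t')) + Σ_{t'≥t} Σ_{n=0}^{2K̲_{t,t'}} 1{n≥2 or t'=t}·P(E_short^{(u,v)}(n,t')), where d_G^{(t')}(u,v) denotes the minimal length of a t'-present (u,v)-path (∞ if none exists). -/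

import Mathlib

open MeasureTheory ProbabilityTheory Real Filter Finset

noncomputable section

/-- `K_{t,t'}`. -/
def Kfun (τ : ℝ) (t t' : ℕ) : ℕ :=
  max (2 * ⌊(Real.log (Real.log t) - Real.log (max 1 (Real.log ((t' : ℝ) / t)))) /
        |Real.log (τ - 2)|⌋₊) 2

/-- a growing (multi)graph sequence, recorded through its adjacency relations
`A s u v`: the vertex set of `G_s` is `[s]`, `G_s ⊆ G_{s+1}`, and every new edge is
incident to the newly arrived vertex. -/
def GrowingGraph (A : ℕ → ℕ → ℕ → Prop) : Prop :=
  (∀ s u v, A s u v → A s v u) ∧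
  (∀ s u v, A s u v → 1 ≤ u ∧ u ≤ s ∧ 1 ≤ v ∧ v ≤ s) ∧
  (∀ s u v, A s u v → A (s + 1) u v) ∧
  (∀ s u v, A (s + 1) u v → ¬A s u v → u = s + 1 ∨ v = s + 1)

/-- `pth 0, …, pth n` is a `t'`-present path: pairwise distinct vertices of `[t']`,
consecutive ones adjacent in `G_{t'}`. -/
def PresPath (A : ℕ → ℕ → ℕ → Prop) (t' n : ℕ) (pth : ℕ → ℕ) : Prop :=
  (∀ i ≤ n, ∀ j ≤ n, pth i = pth j → i = j) ∧
  (∀ i ≤ n, 1 ≤ pth i ∧ pth i ≤ t') ∧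
  (∀ i < n, A t' (pth i) (pth (i + 1)))

/-- graph distance at time `t'` (`⊤` if not connected). -/
def dGraph (A : ℕ → ℕ → ℕ → Prop) (t' u v : ℕ) : ENNReal :=
  ⨅ (n : ℕ) (_ : ∃ pth : ℕ → ℕ, PresPath A t' n pth ∧ pth 0 = u ∧ pth n = v), (n : ENNReal)

/-- a birth-threshold array for base time `t`. -/
def BirthArray (t : ℕ) (ℓ : ℕ → ℕ → ℕ) : Prop :=
  (∀ k t', t ≤ t' → 1 ≤ ℓ k t') ∧
  (∀ k k' t', t ≤ t' → k ≤ k' → ℓ k' t' ≤ ℓ k t') ∧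
  (∀ k t₁ t₂, t ≤ t₁ → t₁ ≤ t₂ → ℓ k t₂ ≤ ℓ k t₁) ∧
  (∀ t', t ≤ t' → ℓ 0 t' ≤ t)

/-- a `(k,t')`-bad `q`-path which is `t'`-present. -/
def BadPath (A : ℕ → ℕ → ℕ → Prop) (ℓ : ℕ → ℕ → ℕ) (q k t' : ℕ) (pth : ℕ → ℕ) : Prop :=
  PresPath A t' k pth ∧ pth 0 = q ∧ (∀ j < k, ℓ j t' ≤ pth j) ∧ pth k < ℓ k t'

/-- an `(n,t')`-good `(u,v)`-path which is `t'`-present. -/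
def GoodPath (A : ℕ → ℕ → ℕ → Prop) (ℓ : ℕ → ℕ → ℕ) (u v n t' : ℕ) (pth : ℕ → ℕ) : Prop :=
  PresPath A t' n pth ∧ pth 0 = u ∧ pth n = v ∧
  ∀ j ≤ n / 2, ℓ j t' ≤ min (pth j) (pth (n - j))

/-- the event `E_bad^{(q)}(k,t')` (for base time `t`). -/
def Ebad (A : ℕ → ℕ → ℕ → Prop) (ℓ : ℕ → ℕ → ℕ) (t q k t' : ℕ) : Prop :=
  if k = 0 then q < ℓ 0 t'
  else if t' = t then ∃ pth : ℕ → ℕ, BadPath A ℓ q k t pth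
  else (∃ pth : ℕ → ℕ, BadPath A ℓ q k t' pth) ∧
    ∀ i ≤ k, ¬∃ pth : ℕ → ℕ, BadPath A ℓ q i (t' - 1) pth

/-- the event `E_short^{(u,v)}(n,t')` (for base time `t`). -/
def Eshort (A : ℕ → ℕ → ℕ → Prop) (ℓ : ℕ → ℕ → ℕ) (t u v n t' : ℕ) : Prop :=
  if n = 0 then u = v
  else if t' = t then ∃ pth : ℕ → ℕ, GoodPath A ℓ u v n t pth
  else (∃ pth : ℕ → ℕ, GoodPath A ℓ u v n t' pth) ∧
    ∀ s < t', ¬∃ pth : ℕ → ℕ, PresPath A s n pth ∧ pth 0 = u ∧ pth n = v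

/-- the path weight `p(pth_0,…,pth_k)` of condition `PA(γ)` (zero unless the vertices
are pairwise distinct). -/
def pfun (ν γ : ℝ) (l : List ℕ) : ℝ :=
  if l.Nodup then
    ((l.zip l.tail).map (fun q =>
      ν * ((min q.1 q.2 : ℕ) : ℝ) ^ (-γ) * ((max q.1 q.2 : ℕ) : ℝ) ^ (γ - 1))).prod
  else 0

/-- condition `PA(γ)` with constant `ν` for a random growing graph sequence. -/
def PAgamma {Ω : Type} [MeasurableSpace Ω] (μ : Measure Ω)
    (A : Ω → ℕ → ℕ → ℕ → Prop) (γ ν : ℝ) : Prop :=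
  ∀ t' : ℕ, ∀ l : List ℕ, l.Nodup → (∀ v ∈ l, 1 ≤ v ∧ v ≤ t') →
    μ {ω | l.Chain' (A ω t')} ≤ ENNReal.ofReal (pfun ν γ l)

/-- `f_{[i,k)}^{(t,t')}(y,x)`: expected number (upper bound) of good paths on the
segment `[i,k)` from `y` to `x`, with thresholds `ℓt j = ℓ_{j,t'}`. -/
def ffun (ν γ : ℝ) (ℓt : ℕ → ℕ) (t' i k y x : ℕ) : ℝ :=
  ∑ g ∈ Fintype.piFinset (fun _ : Fin (k - i - 1) => Finset.Icc 1 t'),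
    if ∀ j : Fin (k - i - 1), ℓt (i + 1 + (j : ℕ)) ≤ g j then
      pfun ν γ (y :: (List.ofFn g ++ [x]))
    else 0

/-- the pair `(α_{[0,j)}, β_{[0,j)})`. -/
def abRec (c ν γ : ℝ) (ℓt : ℕ → ℕ) (t' : ℕ) : ℕ → ℝ × ℝ
  | 0 => (0, 0)
  | 1 => (ν * (ℓt 0 : ℝ) ^ (γ - 1), ν * (ℓt 0 : ℝ) ^ (-γ))
  | (j + 2) =>
    (c * ((abRec c ν γ ℓt t' (j + 1)).1 * Real.log ((t' : ℝ) / ℓt (j + 1)) +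
        (abRec c ν γ ℓt t' (j + 1)).2 * (t' : ℝ) ^ (2 * γ - 1)),
     c * ((abRec c ν γ ℓt t' (j + 1)).1 * (ℓt (j + 1) : ℝ) ^ (1 - 2 * γ) +
        (abRec c ν γ ℓt t' (j + 1)).2 * Real.log ((t' : ℝ) / ℓt (j + 1))))

/-- the pair `(φ_{[i,i+j)}, ψ_{[i,i+j)})`. -/
def ppRec (c ν γ : ℝ) (ℓt : ℕ → ℕ) (t' i : ℕ) : ℕ → ℝ × ℝ
  | 0 => (0, 0)
  | 1 => (ν * (t' : ℝ) ^ (γ - 1), 0)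
  | (j + 2) =>
    (c * ((ppRec c ν γ ℓt t' i (j + 1)).1 * Real.log ((t' : ℝ) / ℓt (i + j + 1)) +
        (ppRec c ν γ ℓt t' i (j + 1)).2 * (t' : ℝ) ^ (2 * γ - 1)),
     c * ((ppRec c ν γ ℓt t' i (j + 1)).1 * (ℓt (i + j + 1) : ℝ) ^ (1 - 2 * γ) +
        (ppRec c ν γ ℓt t' i (j + 1)).2 * Real.log ((t' : ℝ) / ℓt (i + j + 1))))

/-!
Look at the first time `t' ≥ t` at which a bad path of length at most `K t'` starts in `u` or `v`,
or a `(u, v)`-path of length at most `2 * K t'` is present. A `(u, v)`-path that is not good has,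
read from one of its two ends, a bad initial segment of at most half its length; hence at time
`t'` there is a bad path or a good `(u, v)`-path. Since `K` is non-increasing, minimality of `t'`
excludes such paths at earlier times, so one of the events `Ebad`, `Eshort` occurs at `t'`.
Finally, every edge created after time `t` contains the newest vertex, whereas the two endpoints
of a path in question were born by time `t` (the last vertex of a bad path lies below
`ℓ 0 t' ≤ t`). A path with at most one edge therefore cannot appear after time `t`.
-/

section Paths

variable {A : ℕ → ℕ → ℕ → Prop} {s s' n u v : ℕ} {p : ℕ → ℕ}

/-- `G_s` contains a path of length `n` from `u` to `v`; the graph distance and the events `Eshort`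
are defined through the existence of such paths. -/
def HasPath (A : ℕ → ℕ → ℕ → Prop) (s n u v : ℕ) : Prop :=
  ∃ p : ℕ → ℕ, PresPath A s n p ∧ p 0 = u ∧ p n = v

lemma dGraph_le_natCast_iff {N : ℕ} :
    dGraph A s u v ≤ N ↔ ∃ n ≤ N, HasPath A s n u v := by
  constructor
  · intro hd
    have hlt : dGraph A s u v < (N + 1 : ℕ) := hd.trans_lt (by exact_mod_cast N.lt_succ_self)
    simp only [dGraph, iInf_lt_iff] at hlt
    obtain ⟨n, hpath, hn⟩ := hlt
    exact ⟨n, Nat.lt_succ_iff.mp (by exact_mod_cast hn), hpath⟩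
  · rintro ⟨n, hn, hpath⟩
    exact (iInf₂_le n hpath).trans (by exact_mod_cast hn)

lemma GrowingGraph.adj_mono (hG : GrowingGraph A) (hs : s ≤ s') (h : A s u v) : A s' u v := by
  obtain ⟨-, -, adj_succ, -⟩ := hG
  induction s', hs using Nat.le_induction with
  | base => exact h
  | succ r _ ih => exact adj_succ _ _ _ ih

lemma GrowingGraph.adj_of_adj_succ (hG : GrowingGraph A) (hu : u ≤ s) (hv : v ≤ s)
    (h : A (s + 1) u v) : A s u v := by
  obtain ⟨-, -, -, new_edge⟩ := hG
  by_contra hnew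
  rcases new_edge _ _ _ h hnew with rfl | rfl <;> omega

namespace PresPath

lemma mono (hG : GrowingGraph A) (hs : s ≤ s') (hp : PresPath A s n p) : PresPath A s' n p := by
  obtain ⟨inj, range, adj⟩ := hp
  exact ⟨inj, fun i hi => ⟨(range i hi).1, (range i hi).2.trans hs⟩,
    fun i hi => hG.adj_mono hs (adj i hi)⟩

lemma take {j : ℕ} (hp : PresPath A s n p) (hj : j ≤ n) : PresPath A s j p := by
  obtain ⟨inj, range, adj⟩ := hp
  exact ⟨fun i hi k hk => inj i (hi.trans hj) k (hk.trans hj), fun i hi => range i (hi.trans hj),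
    fun i hi => adj i (hi.trans_le hj)⟩

lemma reverse (hG : GrowingGraph A) (hp : PresPath A s n p) :
    PresPath A s n (fun i => p (n - i)) := by
  obtain ⟨inj, range, adj⟩ := hp
  obtain ⟨symm, -⟩ := hG
  refine ⟨fun i hi k hk h => ?_, fun i _ => range _ (n.sub_le i), fun i hi => ?_⟩
  · have := inj _ (n.sub_le i) _ (n.sub_le k) h
    omega
  · have h := adj (n - (i + 1)) (by omega)
    rw [show n - (i + 1) + 1 = n - i by omega] at h
    exact symm _ _ _ h

lemma of_succ (hG : GrowingGraph A) (hp : PresPath A (s + 1) n p) (hs : ∀ i ≤ n, p i ≤ s) :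
    PresPath A s n p := by
  obtain ⟨inj, range, adj⟩ := hp
  exact ⟨inj, fun i hi => ⟨(range i hi).1, hs i hi⟩,
    fun i hi => hG.adj_of_adj_succ (hs i hi.le) (hs (i + 1) hi) (adj i hi)⟩

lemma of_succ_of_length_le_one (hG : GrowingGraph A) (hp : PresPath A (s + 1) n p) (hn : n ≤ 1)
    (hfirst : p 0 ≤ s) (hlast : p n ≤ s) : PresPath A s n p := by
  refine hp.of_succ hG fun i hi => ?_
  obtain rfl | rfl : i = 0 ∨ i = n := by omega
  exacts [hfirst, hlast]

end PresPath

end Paths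

section BadAndGoodPaths

variable {A : ℕ → ℕ → ℕ → Prop} {ℓ : ℕ → ℕ → ℕ} {t t' s k n q u v : ℕ} {p : ℕ → ℕ}

/-- `G_s` contains a `(k, s)`-bad path starting in `q`; the events `Ebad` are defined through the
existence of such paths. -/
def HasBadPath (A : ℕ → ℕ → ℕ → Prop) (ℓ : ℕ → ℕ → ℕ) (q k s : ℕ) : Prop :=
  ∃ p : ℕ → ℕ, BadPath A ℓ q k s p

-- Cut the path at its first vertex below the threshold.
lemma PresPath.exists_hasBadPath {j : ℕ} (hp : PresPath A s n p) (hj : j ≤ n)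
    (hlt : p j < ℓ j s) : ∃ i ≤ j, HasBadPath A ℓ (p 0) i s := by
  classical
  have hex : ∃ i, p i < ℓ i s := ⟨j, hlt⟩
  have hle : Nat.find hex ≤ j := Nat.find_min' hex hlt
  exact ⟨Nat.find hex, hle, p, hp.take (hle.trans hj), rfl,
    fun i hi => not_lt.mp (Nat.find_min hex hi), Nat.find_spec hex⟩

lemma PresPath.goodPath_or_exists_hasBadPath (hG : GrowingGraph A) (hp : PresPath A s n p) :
    GoodPath A ℓ (p 0) (p n) n s p ∨
      ∃ q, (q = p 0 ∨ q = p n) ∧ ∃ k ≤ n / 2, HasBadPath A ℓ q k s := by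
  by_cases hgood : ∀ j ≤ n / 2, ℓ j s ≤ min (p j) (p (n - j))
  · exact .inl ⟨hp, rfl, rfl, hgood⟩
  right
  push Not at hgood
  obtain ⟨j, hj, hlt⟩ := hgood
  have hjn : j ≤ n := hj.trans (n.div_le_self 2)
  rcases min_lt_iff.mp hlt with hleft | hright
  · obtain ⟨k, hk, hbad⟩ := hp.exists_hasBadPath hjn hleft
    exact ⟨p 0, .inl rfl, k, hk.trans hj, hbad⟩
  · obtain ⟨k, hk, hbad⟩ := (hp.reverse hG).exists_hasBadPath hjn hright
    exact ⟨p n, .inr rfl, k, hk.trans hj, hbad⟩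

lemma BadPath.last_lt (hℓ : BirthArray t ℓ) (hs : t ≤ s) (hp : BadPath A ℓ q k s p) :
    p k < t := by
  obtain ⟨-, anti_length, -, start_le⟩ := hℓ
  obtain ⟨-, -, -, last_lt⟩ := hp
  calc p k < ℓ k s := last_lt
    _ ≤ ℓ 0 s := anti_length 0 k s hs k.zero_le
    _ ≤ t := start_le s hs

lemma BadPath.exists_hasBadPath_of_succ (hG : GrowingGraph A) (hℓ : BirthArray t ℓ)
    (hq : q ≤ t) (hs : t ≤ s) (hp : BadPath A ℓ q k (s + 1) p) (hk : k ≤ 1) :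
    ∃ i ≤ k, HasBadPath A ℓ q i s := by
  have last_lt_birth := hp.last_lt hℓ (hs.trans s.le_succ)
  obtain ⟨-, -, anti_time, -⟩ := hℓ
  obtain ⟨path, rfl, -, last_lt⟩ := hp
  have path_before : PresPath A s k p :=
    path.of_succ_of_length_le_one hG hk (hq.trans hs) (last_lt_birth.le.trans hs)
  exact path_before.exists_hasBadPath le_rfl
    (last_lt.trans_le (anti_time k s (s + 1) hs s.le_succ))

lemma BadPath.ebad_of_forall_lt (hG : GrowingGraph A) (hℓ : BirthArray t ℓ) (hq : q ≤ t)
    (ht : t ≤ t') (hp : BadPath A ℓ q k t' p)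
    (hfirst : ∀ s, t ≤ s → s < t' → ∀ i ≤ k, ¬HasBadPath A ℓ q i s) :
    (2 ≤ k ∨ t' = t) ∧ Ebad A ℓ t q k t' := by
  constructor
  · by_contra! hshort
    obtain ⟨s, rfl⟩ : ∃ s, t' = s + 1 := Nat.exists_eq_add_one.mpr (by omega)
    have hs : t ≤ s := by omega
    obtain ⟨i, hi, hbad⟩ := hp.exists_hasBadPath_of_succ hG hℓ hq hs (by omega)
    exact hfirst s hs s.lt_succ_self i hi hbad
  · unfold Ebad
    split_ifs with hk ht'
    · obtain ⟨-, rfl, -, last_lt⟩ := hp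
      rwa [hk] at last_lt
    · exact ⟨p, ht' ▸ hp⟩
    · exact ⟨⟨p, hp⟩, hfirst (t' - 1) (by omega) (by omega)⟩

lemma GoodPath.eshort_of_forall_lt (hG : GrowingGraph A) (hu : u ≤ t) (hv : v ≤ t)
    (ht : t ≤ t') (hp : GoodPath A ℓ u v n t' p)
    (hfirst : ∀ s, t ≤ s → s < t' → ¬HasPath A s n u v) :
    (2 ≤ n ∨ t' = t) ∧ Eshort A ℓ t u v n t' := by
  constructor
  · by_contra! hshort
    obtain ⟨s, rfl⟩ : ∃ s, t' = s + 1 := Nat.exists_eq_add_one.mpr (by omega)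
    have hs : t ≤ s := by omega
    obtain ⟨path, rfl, rfl, -⟩ := hp
    have path_before : PresPath A s n p :=
      path.of_succ_of_length_le_one hG (by omega) (hu.trans hs) (hv.trans hs)
    exact hfirst s hs s.lt_succ_self ⟨p, path_before, rfl, rfl⟩
  · unfold Eshort
    split_ifs with hn ht'
    · obtain ⟨-, rfl, rfl, -⟩ := hp
      rw [hn]
    · exact ⟨p, ht' ▸ hp⟩
    · refine ⟨⟨p, hp⟩, fun s hs ⟨p', path, ends⟩ => ?_⟩
      exact hfirst (t' - 1) (by omega) (by omega) ⟨p', path.mono hG (by omega), ends⟩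

end BadAndGoodPaths

section FirstCriticalTime

variable {A : ℕ → ℕ → ℕ → Prop} {ℓ : ℕ → ℕ → ℕ} {K : ℕ → ℕ} {t u v : ℕ}

/-- Time `s` is critical if `G_s` contains a bad path of length at most `K s` starting in `u` or
`v`, or a `(u, v)`-path of length at most `2 * K s`. The events `Ebad` and `Eshort` are read off
at the first critical time. -/
def IsCritical (A : ℕ → ℕ → ℕ → Prop) (ℓ : ℕ → ℕ → ℕ) (u v : ℕ) (K : ℕ → ℕ) (s : ℕ) : Prop :=
  (∃ q ∈ ({u, v} : Finset ℕ), ∃ k ≤ K s, HasBadPath A ℓ q k s) ∨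
    ∃ n ≤ 2 * K s, HasPath A s n u v

lemma IsCritical.exists_hasBadPath_or_goodPath {s : ℕ} (hG : GrowingGraph A)
    (hs : IsCritical A ℓ u v K s) :
    (∃ q ∈ ({u, v} : Finset ℕ), ∃ k ≤ K s, HasBadPath A ℓ q k s) ∨
      ∃ n ≤ 2 * K s, ∃ p, GoodPath A ℓ u v n s p := by
  obtain hbad | ⟨n, hn, p, path, rfl, rfl⟩ := hs
  · exact .inl hbad
  · rcases path.goodPath_or_exists_hasBadPath (ℓ := ℓ) hG with hgood | ⟨q, hq, k, hk, hbad⟩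
    · exact .inr ⟨n, hn, p, hgood⟩
    · exact .inl ⟨q, by simpa using hq, k, by omega, hbad⟩

theorem exists_ebad_or_exists_eshort (hG : GrowingGraph A) (hu : u ≤ t) (hv : v ≤ t)
    (hℓ : BirthArray t ℓ) (hK : AntitoneOn K (Set.Ici t))
    (hcrit : ∃ t', t ≤ t' ∧ IsCritical A ℓ u v K t') :
    (∃ q ∈ ({u, v} : Finset ℕ), ∃ t', t ≤ t' ∧ ∃ k ∈ Finset.range (K t' + 1),
      (2 ≤ k ∨ t' = t) ∧ Ebad A ℓ t q k t') ∨
    ∃ t', t ≤ t' ∧ ∃ n ∈ Finset.range (2 * K t' + 1),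
      (2 ≤ n ∨ t' = t) ∧ Eshort A ℓ t u v n t' := by
  obtain ⟨t', ⟨ht, hcrit⟩, hmin⟩ := exists_minimal_of_wellFoundedLT _ hcrit
  have not_critical : ∀ s, t ≤ s → s < t' → ¬IsCritical A ℓ u v K s :=
    fun s hs hst h => hst.not_ge (hmin ⟨hs, h⟩ hst.le)
  have hK_le : ∀ s, t ≤ s → s < t' → K t' ≤ K s := fun s hs hst => hK hs ht hst.le
  rcases hcrit.exists_hasBadPath_or_goodPath hG with ⟨q, hq, k, hk, p, hbad⟩ | ⟨n, hn, p, hgood⟩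
  · have hqt : q ≤ t := by
      rcases (by simpa using hq : q = u ∨ q = v) with rfl | rfl <;> assumption
    exact .inl ⟨q, hq, t', ht, k, Finset.mem_range_succ_iff.mpr hk,
      hbad.ebad_of_forall_lt hG hℓ hqt ht fun s hs hst i hi h =>
        not_critical s hs hst (.inl ⟨q, hq, i, hi.trans (hk.trans (hK_le s hs hst)), h⟩)⟩
  · exact .inr ⟨t', ht, n, Finset.mem_range_succ_iff.mpr hn,
      hgood.eshort_of_forall_lt hG hu hv ht fun s hs hst h =>
        not_critical s hs hst (.inr ⟨n, hn.trans (Nat.mul_le_mul_left 2 (hK_le s hs hst)), h⟩)⟩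

end FirstCriticalTime

section UnionBound

variable {Ω : Type*} [MeasurableSpace Ω]

lemma measure_setOf_const_and (μ : Measure Ω) (c : Prop) [Decidable c] (E : Ω → Prop) :
    μ {ω | c ∧ E ω} = if c then μ {ω | E ω} else 0 := by
  split_ifs with hc <;> simp [hc]

lemma measure_exists_exists_le_tsum_sum {ι κ : Type*} [Countable ι] (μ : Measure Ω)
    (I : ι → Prop) [DecidablePred I] (S : ι → Finset κ)
    (C : ι → κ → Prop) [∀ i, DecidablePred (C i)] (E : ι → κ → Ω → Prop) :
    μ {ω | ∃ i, I i ∧ ∃ k ∈ S i, C i k ∧ E i k ω} ≤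
      ∑' i, if I i then ∑ k ∈ S i, (if C i k then μ {ω | E i k ω} else 0) else 0 := by
  have inner_le (i : ι) : μ {ω | ∃ k ∈ S i, C i k ∧ E i k ω} ≤
      ∑ k ∈ S i, if C i k then μ {ω | E i k ω} else 0 := by
    simp only [← measure_setOf_const_and, ← exists_prop (a := _ ∈ S i), Set.ofPred_exists]
    exact measure_biUnion_finset_le _ _
  calc μ {ω | ∃ i, I i ∧ ∃ k ∈ S i, C i k ∧ E i k ω}
      ≤ ∑' i, μ {ω | I i ∧ ∃ k ∈ S i, C i k ∧ E i k ω} := by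
        rw [Set.ofPred_exists]
        exact measure_iUnion_le _
    _ ≤ _ := by
        simp only [measure_setOf_const_and]
        refine ENNReal.tsum_le_tsum fun i => ?_
        split_ifs
        exacts [inner_le i, le_rfl]

lemma kfun_antitone (τ : ℝ) (t : ℕ) : Antitone (Kfun τ t) := by
  intro a b hab
  have hlog : max 1 (log ((a : ℝ) / t)) ≤ max 1 (log ((b : ℝ) / t)) := by
    rcases (by positivity : 0 ≤ (a : ℝ) / t).eq_or_lt with hzero | hpos
    · simp [← hzero]
    · gcongr
  unfold Kfun
  gcongr

theorem distance_event_union_bound_general (μ : Measure Ω)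
    {A : Ω → ℕ → ℕ → ℕ → Prop} (hA : ∀ᵐ ω ∂μ, GrowingGraph (A ω))
    {t u v : ℕ} (hu : u ≤ t) (hv : v ≤ t) {ℓ : ℕ → ℕ → ℕ} (hℓ : BirthArray t ℓ)
    {K : ℕ → ℕ} (hK : AntitoneOn K (Set.Ici t)) :
    μ {ω | ∃ t' : ℕ, t ≤ t' ∧ dGraph (A ω) t' u v ≤ ((2 * K t' : ℕ) : ENNReal)} ≤
      (∑ q ∈ ({u, v} : Finset ℕ), ∑' t' : ℕ,
        if t ≤ t' then
          ∑ k ∈ Finset.range (K t' + 1),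
            (if 2 ≤ k ∨ t' = t then μ {ω | Ebad (A ω) ℓ t q k t'} else 0)
        else 0) +
      ∑' t' : ℕ,
        if t ≤ t' then
          ∑ n ∈ Finset.range (2 * K t' + 1),
            (if 2 ≤ n ∨ t' = t then μ {ω | Eshort (A ω) ℓ t u v n t'} else 0)
        else 0 := by
  let bad (q : ℕ) : Set Ω := {ω | ∃ t', t ≤ t' ∧ ∃ k ∈ Finset.range (K t' + 1),
    (2 ≤ k ∨ t' = t) ∧ Ebad (A ω) ℓ t q k t'}
  let short : Set Ω := {ω | ∃ t', t ≤ t' ∧ ∃ n ∈ Finset.range (2 * K t' + 1),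
    (2 ≤ n ∨ t' = t) ∧ Eshort (A ω) ℓ t u v n t'}
  calc μ {ω | ∃ t' : ℕ, t ≤ t' ∧ dGraph (A ω) t' u v ≤ ((2 * K t' : ℕ) : ENNReal)}
      ≤ μ ((⋃ q ∈ ({u, v} : Finset ℕ), bad q) ∪ short) := by
        refine measure_mono_ae ?_
        filter_upwards [hA] with ω hG ⟨t', ht, hd⟩
        rcases exists_ebad_or_exists_eshort hG hu hv hℓ hK
          ⟨t', ht, .inr (dGraph_le_natCast_iff.mp hd)⟩ with ⟨q, hq, hbad⟩ | hshort
        exacts [.inl (Set.mem_biUnion (x := q) hq hbad), .inr hshort]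
    _ ≤ ∑ q ∈ {u, v}, μ (bad q) + μ short :=
        (measure_union_le _ _).trans (add_le_add_left (measure_biUnion_finset_le _ _) _)
    _ ≤ _ := add_le_add
        (Finset.sum_le_sum fun _ _ => measure_exists_exists_le_tsum_sum μ _ _ _ _)
        (measure_exists_exists_le_tsum_sum μ _ _ _ _)

end UnionBound

/-- **Corollary 3.10** (union bound over the decomposition): the probability that
the graph distance between `u` and `v` is ever at most `2K̲_{t,t'}` is bounded by
the summed probabilities of the events `E_bad` and `E_short`. -/
theorem distance_event_union_bound
    {Ω : Type} [MeasurableSpace Ω] (μ : Measure Ω) [IsProbabilityMeasure μ]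
    (A : Ω → ℕ → ℕ → ℕ → Prop) (hA : ∀ᵐ ω ∂μ, GrowingGraph (A ω))
    (τ : ℝ) (hτ1 : 2 < τ) (hτ2 : τ < 3)
    (t : ℕ) (ht : 1 ≤ t) (u v : ℕ)
    (hu : u ∈ Finset.Icc 1 t) (hv : v ∈ Finset.Icc 1 t) (huv : u ≠ v)
    (ℓ : ℕ → ℕ → ℕ) (hℓ : BirthArray t ℓ) (MG : ℕ) :
    μ {ω | ∃ t' : ℕ, t ≤ t' ∧
        dGraph (A ω) t' u v ≤ ((2 * (Kfun τ t t' - MG) : ℕ) : ENNReal)} ≤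
      (∑ q ∈ ({u, v} : Finset ℕ), ∑' t' : ℕ,
        if t ≤ t' then
          ∑ k ∈ Finset.range (Kfun τ t t' - MG + 1),
            (if 2 ≤ k ∨ t' = t then μ {ω | Ebad (A ω) ℓ t q k t'} else 0)
        else 0) +
      ∑' t' : ℕ,
        if t ≤ t' then
          ∑ n ∈ Finset.range (2 * (Kfun τ t t' - MG) + 1),
            (if 2 ≤ n ∨ t' = t then μ {ω | Eshort (A ω) ℓ t u v n t'} else 0)
        else 0 :=
  distance_event_union_bound_general μ hA (Finset.mem_Icc.mp hu).2 (Finset.mem_Icc.mp hv).2 hℓ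
    fun _ _ _ _ h => Nat.sub_le_sub_right (kfun_antitone τ t h) MG

end
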